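/- Let |GHZ⟩ = (|000⟩ + |111⟩)/√2 in (C²)^⊗3 and, for 1/2 < v ≤ 1, let ρ(v) = v|GHZ⟩⟨GHZ| + (1−v)·1₈/8. Then ρ(v) is not a triangle network state with local channels: there exist no d ≥ 1, density matrices ρ_a, ρ_b, ρ_c on C^d ⊗ C^d and quantum channels E_A, E_B, E_C from (C^d ⊗ C^d)-matrices to 2×2 matrices such that (E_A ⊗ E_B ⊗ E_C)(ρ_b ⊗ ρ_c ⊗ ρ_a) = ρ(v), where the tensor factors are arranged in the basic triangle network ordering. -/

import Mathlib

open Matrix Kronecker BigOperators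
open scoped ComplexOrder

noncomputable section

/-- Covariance matrix of a family of observables `M` in the state `ρ`. -/
def covMat {n ι : Type*} [Fintype n] (M : ι → Matrix n n ℂ) (ρ : Matrix n n ℂ) :
    Matrix ι ι ℂ :=
  Matrix.of fun i j => (M i * M j * ρ).trace - (M i * ρ).trace * (M j * ρ).trace

/-- A density matrix: positive semidefinite with unit trace. -/
def IsDensity {n : Type*} [Fintype n] (ρ : Matrix n n ℂ) : Prop :=
  ρ.PosSemidef ∧ ρ.trace = 1

/-- Partial trace over the first tensor factor. -/
def ptrace₁ {m n : Type*} [Fintype m] (M : Matrix (m × n) (m × n) ℂ) : Matrix n n ℂ :=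
  Matrix.of fun i j => ∑ k, M (k, i) (k, j)

/-- Partial trace over the second tensor factor. -/
def ptrace₂ {m n : Type*} [Fintype n] (M : Matrix (m × n) (m × n) ℂ) : Matrix m m ℂ :=
  Matrix.of fun i j => ∑ k, M (i, k) (j, k)

/-- Index of a two-qudit space. -/
abbrev D2 (d : ℕ) := Fin d × Fin d

/-- Index of the six-factor triangle-network space, ordered C₂, A₁, A₂, B₁, B₂, C₁. -/
abbrev TriIdx (d : ℕ) := D2 d × (D2 d × D2 d)

/-- The basic triangle network state `ρ_b ⊗ ρ_c ⊗ ρ_a`. -/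
def btnState {d : ℕ} (ρa ρb ρc : Matrix (D2 d) (D2 d) ℂ) :
    Matrix (TriIdx d) (TriIdx d) ℂ :=
  ρb ⊗ₖ (ρc ⊗ₖ ρa)

/-- Embed an observable of Alice (acting on A₁A₂) into the global space. -/
def embedA {d : ℕ} (M : Matrix (D2 d) (D2 d) ℂ) : Matrix (TriIdx d) (TriIdx d) ℂ :=
  Matrix.of fun p q =>
    if p.1.1 = q.1.1 ∧ p.2.1.2 = q.2.1.2 ∧ p.2.2 = q.2.2
    then M (p.1.2, p.2.1.1) (q.1.2, q.2.1.1) else 0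

/-- Embed an observable of Bob (acting on B₁B₂) into the global space. -/
def embedB {d : ℕ} (M : Matrix (D2 d) (D2 d) ℂ) : Matrix (TriIdx d) (TriIdx d) ℂ :=
  Matrix.of fun p q =>
    if p.1 = q.1 ∧ p.2.1.1 = q.2.1.1 ∧ p.2.2.2 = q.2.2.2
    then M (p.2.1.2, p.2.2.1) (q.2.1.2, q.2.2.1) else 0

/-- Embed an observable of Charlie (acting on C₁C₂) into the global space. -/
def embedC {d : ℕ} (M : Matrix (D2 d) (D2 d) ℂ) : Matrix (TriIdx d) (TriIdx d) ℂ :=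
  Matrix.of fun p q =>
    if p.1.2 = q.1.2 ∧ p.2.1 = q.2.1 ∧ p.2.2.1 = q.2.2.1
    then M (p.2.2.2, p.1.1) (q.2.2.2, q.1.1) else 0

section marginals
variable {d : ℕ} (ρa ρb ρc : Matrix (D2 d) (D2 d) ℂ)

/-- Marginal of ρ_BTN on A₁ (second factor of ρ_b = ρ^{C₂A₁}). -/
def margA1 : Matrix (Fin d) (Fin d) ℂ := ptrace₁ ρb
/-- Marginal on C₂. -/
def margC2 : Matrix (Fin d) (Fin d) ℂ := ptrace₂ ρb
/-- Marginal on A₂ (first factor of ρ_c = ρ^{A₂B₁}). -/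
def margA2 : Matrix (Fin d) (Fin d) ℂ := ptrace₂ ρc
/-- Marginal on B₁. -/
def margB1 : Matrix (Fin d) (Fin d) ℂ := ptrace₁ ρc
/-- Marginal on B₂ (first factor of ρ_a = ρ^{B₂C₁}). -/
def margB2 : Matrix (Fin d) (Fin d) ℂ := ptrace₂ ρa
/-- Marginal on C₁. -/
def margC1 : Matrix (Fin d) (Fin d) ℂ := ptrace₁ ρa

/-- Reduced observable A^(2) = tr_{A₁}(A (ρ^{A₁} ⊗ 1)). -/
def redA2 (M : Matrix (D2 d) (D2 d) ℂ) : Matrix (Fin d) (Fin d) ℂ :=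
  ptrace₁ (M * (margA1 ρb ⊗ₖ (1 : Matrix (Fin d) (Fin d) ℂ)))
/-- Reduced observable A^(1) = tr_{A₂}(A (1 ⊗ ρ^{A₂})). -/
def redA1 (M : Matrix (D2 d) (D2 d) ℂ) : Matrix (Fin d) (Fin d) ℂ :=
  ptrace₂ (M * ((1 : Matrix (Fin d) (Fin d) ℂ) ⊗ₖ margA2 ρc))
/-- Reduced observable B^(1) = tr_{B₂}(B (1 ⊗ ρ^{B₂})). -/
def redB1 (M : Matrix (D2 d) (D2 d) ℂ) : Matrix (Fin d) (Fin d) ℂ :=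
  ptrace₂ (M * ((1 : Matrix (Fin d) (Fin d) ℂ) ⊗ₖ margB2 ρa))
/-- Reduced observable B^(2) = tr_{B₁}(B (ρ^{B₁} ⊗ 1)). -/
def redB2 (M : Matrix (D2 d) (D2 d) ℂ) : Matrix (Fin d) (Fin d) ℂ :=
  ptrace₁ (M * (margB1 ρc ⊗ₖ (1 : Matrix (Fin d) (Fin d) ℂ)))
/-- Reduced observable C^(1) = tr_{C₂}(C (1 ⊗ ρ^{C₂})); here C acts on C₁C₂. -/
def redC1 (M : Matrix (D2 d) (D2 d) ℂ) : Matrix (Fin d) (Fin d) ℂ :=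
  ptrace₂ (M * ((1 : Matrix (Fin d) (Fin d) ℂ) ⊗ₖ margC2 ρb))
/-- Reduced observable C^(2) = tr_{C₁}(C (ρ^{C₁} ⊗ 1)). -/
def redC2 (M : Matrix (D2 d) (D2 d) ℂ) : Matrix (Fin d) (Fin d) ℂ :=
  ptrace₁ (M * (margC1 ρa ⊗ₖ (1 : Matrix (Fin d) (Fin d) ℂ)))

end marginals


/-- The global Kraus operator `K_A ⊗ K_B ⊗ K_C`, mapping the six-factor
triangle-network space (ordered C₂, A₁, A₂, B₁, B₂, C₁) to the output space
of the three parties. -/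
def globalKraus {d nA nB nC : ℕ}
    (KA : Matrix (Fin nA) (D2 d) ℂ) (KB : Matrix (Fin nB) (D2 d) ℂ)
    (KC : Matrix (Fin nC) (D2 d) ℂ) :
    Matrix (Fin nA × Fin nB × Fin nC) (TriIdx d) ℂ :=
  Matrix.of fun o i =>
    KA o.1 (i.1.2, i.2.1.1) * KB o.2.1 (i.2.1.2, i.2.2.1) * KC o.2.2 (i.2.2.2, i.1.1)

/-- The triangle network state with local channels,
`(E_A ⊗ E_B ⊗ E_C)(ρ_BTN)`, with the channels given by Kraus operators. -/
def ctnState {d nA nB nC LA LB LC : ℕ}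
    (ρa ρb ρc : Matrix (D2 d) (D2 d) ℂ)
    (KA : Fin LA → Matrix (Fin nA) (D2 d) ℂ)
    (KB : Fin LB → Matrix (Fin nB) (D2 d) ℂ)
    (KC : Fin LC → Matrix (Fin nC) (D2 d) ℂ) :
    Matrix (Fin nA × Fin nB × Fin nC) (Fin nA × Fin nB × Fin nC) ℂ :=
  ∑ l, ∑ m, ∑ n,
    globalKraus (KA l) (KB m) (KC n) * btnState ρa ρb ρc *
      (globalKraus (KA l) (KB m) (KC n))ᴴ

/-- Embed an observable of Alice into the tripartite output space. -/
def outA {nA nB nC : ℕ} (M : Matrix (Fin nA) (Fin nA) ℂ) :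
    Matrix (Fin nA × Fin nB × Fin nC) (Fin nA × Fin nB × Fin nC) ℂ :=
  M ⊗ₖ (1 : Matrix (Fin nB × Fin nC) (Fin nB × Fin nC) ℂ)

/-- Embed an observable of Bob into the tripartite output space. -/
def outB {nA nB nC : ℕ} (M : Matrix (Fin nB) (Fin nB) ℂ) :
    Matrix (Fin nA × Fin nB × Fin nC) (Fin nA × Fin nB × Fin nC) ℂ :=
  Matrix.of fun p q => if p.1 = q.1 ∧ p.2.2 = q.2.2 then M p.2.1 q.2.1 else 0

/-- Embed an observable of Charlie into the tripartite output space. -/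
def outC {nA nB nC : ℕ} (M : Matrix (Fin nC) (Fin nC) ℂ) :
    Matrix (Fin nA × Fin nB × Fin nC) (Fin nA × Fin nB × Fin nC) ℂ :=
  (1 : Matrix (Fin nA) (Fin nA) ℂ) ⊗ₖ ((1 : Matrix (Fin nB) (Fin nB) ℂ) ⊗ₖ M)

/-- The three-qubit GHZ state vector `(|000⟩ + |111⟩)/√2`. -/
def ghzVec : Fin 2 × Fin 2 × Fin 2 → ℂ := fun i =>
  if i = (0, 0, 0) ∨ i = (1, 1, 1) then ((Real.sqrt 2)⁻¹ : ℝ) else 0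

/-- The GHZ state mixed with white noise, `v |GHZ⟩⟨GHZ| + (1−v) 1/8`. -/
def ghzNoisy (v : ℝ) : Matrix (Fin 2 × Fin 2 × Fin 2) (Fin 2 × Fin 2 × Fin 2) ℂ :=
  (v : ℂ) • vecMulVec ghzVec (star ghzVec) +
    ((1 - v : ℝ) : ℂ) • ((8 : ℂ)⁻¹ • (1 : Matrix (Fin 2 × Fin 2 × Fin 2) (Fin 2 × Fin 2 × Fin 2) ℂ))

/-!
In the Heisenberg picture the local channels turn an observable of each party into an observable on
the two factors which that party holds. Two parties share a single source, so the covariance of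
their observables depends only on the averages of these over the factors from the other sources, and
twice the covariance is at most the sum of the variances of the two averages. Each party contributes
two averages, one for each of its sources. A noncommutative Efron–Stein inequality bounds the sum of
their variances by the variance of the Heisenberg-picture observable, and the Kadison–Schwarz
inequality bounds the latter by the variance of the original observable. Summing over the three
pairs of parties gives `2 (Γ₀₁ + Γ₁₂ + Γ₂₀) ≤ tr Γ` for the covariance matrix `Γ`. For the noisy GHZ
state and the observables `σ_z` the variances are `1` and the covariances are `v`, so `6 v ≤ 3`.
-/

section PartialTrace

variable {m n : Type*}

lemma posSemidef_ptrace₁ [Fintype m] {M : Matrix (m × n) (m × n) ℂ} (hM : M.PosSemidef) :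
    (ptrace₁ M).PosSemidef := by
  have : ptrace₁ M = ∑ k, M.submatrix (Prod.mk k) (Prod.mk k) := by
    ext i j
    simp [ptrace₁, Matrix.sum_apply]
  exact this ▸ posSemidef_sum _ fun k _ => hM.submatrix _

lemma posSemidef_ptrace₂ [Fintype n] {M : Matrix (m × n) (m × n) ℂ} (hM : M.PosSemidef) :
    (ptrace₂ M).PosSemidef := by
  have : ptrace₂ M = ∑ k, M.submatrix (·, k) (·, k) := by
    ext i j
    simp [ptrace₂, Matrix.sum_apply]
  exact this ▸ posSemidef_sum _ fun k _ => hM.submatrix _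

lemma ptrace₁_add [Fintype m] (M N : Matrix (m × n) (m × n) ℂ) :
    ptrace₁ (M + N) = ptrace₁ M + ptrace₁ N := by
  ext i j
  simp [ptrace₁, Finset.sum_add_distrib]

lemma ptrace₂_add [Fintype n] (M N : Matrix (m × n) (m × n) ℂ) :
    ptrace₂ (M + N) = ptrace₂ M + ptrace₂ N := by
  ext i j
  simp [ptrace₂, Finset.sum_add_distrib]

lemma ptrace₁_kronecker [Fintype m] (X : Matrix m m ℂ) (Y : Matrix n n ℂ) :
    ptrace₁ (X ⊗ₖ Y) = X.trace • Y := by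
  ext i j
  simp [ptrace₁, trace, Finset.sum_mul]

lemma ptrace₂_kronecker [Fintype n] (X : Matrix m m ℂ) (Y : Matrix n n ℂ) :
    ptrace₂ (X ⊗ₖ Y) = Y.trace • X := by
  ext i j
  simp [ptrace₂, trace, ← Finset.mul_sum, mul_comm]

lemma kronecker_induction [Finite m] [Finite n]
    {p : Matrix (m × n) (m × n) ℂ → Prop}
    (add : ∀ M N, p M → p N → p (M + N)) (kronecker : ∀ X Y, p (X ⊗ₖ Y))
    (M : Matrix (m × n) (m × n) ℂ) : p M := by
  classical
  cases nonempty_fintype m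
  cases nonempty_fintype n
  refine Matrix.induction_on' M (by simpa using kronecker 0 0) add fun i j x => ?_
  simpa [single_kronecker_single] using kronecker (single i.1 j.1 x) (single i.2 j.2 1)

variable [Fintype m] [Fintype n]

lemma trace_ptrace₁ (M : Matrix (m × n) (m × n) ℂ) : (ptrace₁ M).trace = M.trace := by
  simp only [ptrace₁, trace, diag_apply, of_apply, Fintype.sum_prod_type_right]

lemma trace_ptrace₂ (M : Matrix (m × n) (m × n) ℂ) : (ptrace₂ M).trace = M.trace := by
  simp only [ptrace₂, trace, diag_apply, of_apply, Fintype.sum_prod_type]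

lemma trace_one_kronecker_mul [DecidableEq m] (X : Matrix n n ℂ) (M : Matrix (m × n) (m × n) ℂ) :
    (((1 : Matrix m m ℂ) ⊗ₖ X) * M).trace = (X * ptrace₁ M).trace := by
  simp only [trace, diag_apply, mul_apply, ptrace₁, of_apply, Fintype.sum_prod_type_right,
    kroneckerMap_apply, one_apply, ite_mul, one_mul, zero_mul, Finset.sum_ite_eq,
    Finset.mem_univ, if_true, Finset.mul_sum]
  exact Finset.sum_congr rfl fun _ _ => Finset.sum_comm

lemma trace_kronecker_one_mul [DecidableEq n] (X : Matrix m m ℂ) (M : Matrix (m × n) (m × n) ℂ) :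
    ((X ⊗ₖ (1 : Matrix n n ℂ)) * M).trace = (X * ptrace₂ M).trace := by
  simp only [trace, diag_apply, mul_apply, ptrace₂, of_apply, Fintype.sum_prod_type,
    kroneckerMap_apply, one_apply, mul_ite, ite_mul, mul_one, mul_zero, zero_mul,
    Finset.sum_ite_eq, Finset.mem_univ, if_true, Finset.mul_sum]
  exact Finset.sum_congr rfl fun _ _ => Finset.sum_comm

end PartialTrace

namespace IsDensity

variable {m n : Type*} [Fintype m] [Fintype n]

lemma ptrace₁ {ρ : Matrix (m × n) (m × n) ℂ} (hρ : IsDensity ρ) : IsDensity (ptrace₁ ρ) :=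
  ⟨posSemidef_ptrace₁ hρ.1, by rw [trace_ptrace₁, hρ.2]⟩

lemma ptrace₂ {ρ : Matrix (m × n) (m × n) ℂ} (hρ : IsDensity ρ) : IsDensity (ptrace₂ ρ) :=
  ⟨posSemidef_ptrace₂ hρ.1, by rw [trace_ptrace₂, hρ.2]⟩

lemma kronecker {s : Matrix m m ℂ} {t : Matrix n n ℂ} (hs : IsDensity s) (ht : IsDensity t) :
    IsDensity (s ⊗ₖ t) :=
  ⟨hs.1.kronecker ht.1, by rw [trace_kronecker, hs.2, ht.2, mul_one]⟩

end IsDensity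

section Covariance

variable {n : Type*} [Fintype n]

/-- The covariance `⟨X Y⟩ - ⟨X⟩ ⟨Y⟩` of two observables in the state `ρ`, i.e. a single entry of
`covMat`. It is complex-valued, and is not symmetric in `X` and `Y` unless they commute. -/
def quantumCov (ρ X Y : Matrix n n ℂ) : ℂ :=
  (X * Y * ρ).trace - (X * ρ).trace * (Y * ρ).trace

lemma quantumCov_sub_left (ρ X Y W : Matrix n n ℂ) :
    quantumCov ρ (X - Y) W = quantumCov ρ X W - quantumCov ρ Y W := by
  simp only [quantumCov, Matrix.sub_mul, trace_sub]
  ring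

lemma quantumCov_sub_right (ρ X Y W : Matrix n n ℂ) :
    quantumCov ρ X (Y - W) = quantumCov ρ X Y - quantumCov ρ X W := by
  simp only [quantumCov, Matrix.mul_sub, Matrix.sub_mul, trace_sub]
  ring

lemma quantumCov_smul_one_right [DecidableEq n] {ρ : Matrix n n ℂ} (hρ : IsDensity ρ)
    (X : Matrix n n ℂ) (c : ℂ) : quantumCov ρ X (c • 1) = 0 := by
  simp [quantumCov, hρ.2, mul_comm c]

lemma quantumCov_smul_one_left [DecidableEq n] {ρ : Matrix n n ℂ} (hρ : IsDensity ρ)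
    (c : ℂ) (X : Matrix n n ℂ) : quantumCov ρ (c • 1) X = 0 := by
  simp [quantumCov, hρ.2]

lemma quantumCov_submatrix {m : Type*} [Fintype m] (ρ X Y : Matrix n n ℂ) (e : m ≃ n) :
    quantumCov (ρ.submatrix e e) (X.submatrix e e) (Y.submatrix e e) = quantumCov ρ X Y := by
  have trace_submatrix (M : Matrix n n ℂ) : (M.submatrix e e).trace = M.trace :=
    e.sum_comp fun i => M i i
  simp only [quantumCov, submatrix_mul_equiv, trace_submatrix]

open scoped MatrixOrder in
lemma trace_mul_nonneg {X ρ : Matrix n n ℂ} (hX : X.PosSemidef) (hρ : ρ.PosSemidef) :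
    0 ≤ (X * ρ).trace := by
  classical
  obtain ⟨N, rfl⟩ := CStarAlgebra.nonneg_iff_eq_star_mul_self.mp hX.nonneg
  rw [star_eq_conjTranspose, Matrix.mul_assoc, trace_mul_comm]
  exact (hρ.mul_mul_conjTranspose_same N).trace_nonneg

lemma quantumCov_conjTranspose_self_nonneg {ρ : Matrix n n ℂ} (hρ : IsDensity ρ)
    (X : Matrix n n ℂ) : 0 ≤ quantumCov ρ Xᴴ X := by
  classical
  have mean_conjTranspose : (Xᴴ * ρ).trace = star (X * ρ).trace := by
    rw [← trace_conjTranspose, conjTranspose_mul, hρ.1.1.eq, trace_mul_comm]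
  set x := (X * ρ).trace with hx
  have centered : quantumCov ρ Xᴴ X = ((X - x • 1)ᴴ * (X - x • 1) * ρ).trace := by
    simp only [quantumCov, mean_conjTranspose, conjTranspose_sub, conjTranspose_smul,
      conjTranspose_one, Matrix.sub_mul, Matrix.mul_sub, Matrix.smul_mul, Matrix.mul_smul,
      Matrix.one_mul, Matrix.mul_one, trace_sub, trace_smul, smul_eq_mul, hρ.2, ← hx]
    ring
  rw [centered]
  exact trace_mul_nonneg (posSemidef_conjTranspose_mul_self _) hρ.1

end Covariance

section ReducedObservable

variable {m n : Type*} [Fintype m] [Fintype n]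

/-- The average of a bipartite observable `M` over its second factor, which is in the state `t`:
the observable `M₁` on the first factor with `⟨M₁⟩_s = ⟨M⟩_{s ⊗ t}` for all `s`. The observables
`redA1`, `redB1` and `redC1` have this form. -/
def reduceFst [DecidableEq m] (t : Matrix n n ℂ) (M : Matrix (m × n) (m × n) ℂ) : Matrix m m ℂ :=
  ptrace₂ (M * ((1 : Matrix m m ℂ) ⊗ₖ t))

/-- The average of a bipartite observable over its first factor, which is in the state `s`. The
observables `redA2`, `redB2` and `redC2` have this form. -/
def reduceSnd [DecidableEq n] (s : Matrix m m ℂ) (M : Matrix (m × n) (m × n) ℂ) : Matrix n n ℂ :=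
  ptrace₁ (M * (s ⊗ₖ (1 : Matrix n n ℂ)))

lemma reduceFst_add [DecidableEq m] (t : Matrix n n ℂ) (M N : Matrix (m × n) (m × n) ℂ) :
    reduceFst t (M + N) = reduceFst t M + reduceFst t N := by
  rw [reduceFst, Matrix.add_mul, ptrace₂_add, ← reduceFst, ← reduceFst]

lemma reduceSnd_add [DecidableEq n] (s : Matrix m m ℂ) (M N : Matrix (m × n) (m × n) ℂ) :
    reduceSnd s (M + N) = reduceSnd s M + reduceSnd s N := by
  rw [reduceSnd, Matrix.add_mul, ptrace₁_add, ← reduceSnd, ← reduceSnd]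

lemma reduceFst_kronecker [DecidableEq m] (t : Matrix n n ℂ) (X : Matrix m m ℂ)
    (Y : Matrix n n ℂ) : reduceFst t (X ⊗ₖ Y) = (Y * t).trace • X := by
  rw [reduceFst, ← mul_kronecker_mul, ptrace₂_kronecker, Matrix.mul_one]

lemma reduceSnd_kronecker [DecidableEq n] (s : Matrix m m ℂ) (X : Matrix m m ℂ)
    (Y : Matrix n n ℂ) : reduceSnd s (X ⊗ₖ Y) = (X * s).trace • Y := by
  rw [reduceSnd, ← mul_kronecker_mul, ptrace₁_kronecker, Matrix.mul_one]

lemma isHermitian_reduceFst [DecidableEq m] {t : Matrix n n ℂ} {M : Matrix (m × n) (m × n) ℂ}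
    (ht : t.IsHermitian) (hM : M.IsHermitian) : (reduceFst t M).IsHermitian := by
  ext i j
  simp only [reduceFst, ptrace₂, of_apply, conjTranspose_apply, mul_apply,
    Fintype.sum_prod_type_right, kroneckerMap_apply, one_apply, ite_mul, one_mul, zero_mul,
    mul_ite, mul_zero, Finset.sum_ite_eq', Finset.mem_univ, if_true, star_sum, star_mul',
    hM.apply, ht.apply]
  exact Finset.sum_comm

lemma isHermitian_reduceSnd [DecidableEq n] {s : Matrix m m ℂ} {M : Matrix (m × n) (m × n) ℂ}
    (hs : s.IsHermitian) (hM : M.IsHermitian) : (reduceSnd s M).IsHermitian := by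
  ext i j
  simp only [reduceSnd, ptrace₁, of_apply, conjTranspose_apply, mul_apply, Fintype.sum_prod_type,
    kroneckerMap_apply, one_apply, mul_one, mul_ite, mul_zero, Finset.sum_ite_eq',
    Finset.mem_univ, if_true, star_sum, star_mul', hM.apply, hs.apply]
  exact Finset.sum_comm

lemma trace_mul_kronecker_eq_reduceFst [DecidableEq m] (M : Matrix (m × n) (m × n) ℂ)
    (X : Matrix m m ℂ) (t : Matrix n n ℂ) :
    (M * (X ⊗ₖ t)).trace = (reduceFst t M * X).trace := by
  classical
  have factor : X ⊗ₖ t = ((1 : Matrix m m ℂ) ⊗ₖ t) * (X ⊗ₖ (1 : Matrix n n ℂ)) := by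
    rw [← mul_kronecker_mul, Matrix.one_mul, Matrix.mul_one]
  rw [factor, ← Matrix.mul_assoc, trace_mul_comm, trace_kronecker_one_mul, trace_mul_comm,
    reduceFst]

lemma trace_mul_kronecker_eq_reduceSnd [DecidableEq n] (M : Matrix (m × n) (m × n) ℂ)
    (s : Matrix m m ℂ) (X : Matrix n n ℂ) :
    (M * (s ⊗ₖ X)).trace = (reduceSnd s M * X).trace := by
  classical
  have factor : s ⊗ₖ X = (s ⊗ₖ (1 : Matrix n n ℂ)) * ((1 : Matrix m m ℂ) ⊗ₖ X) := by
    rw [← mul_kronecker_mul, Matrix.one_mul, Matrix.mul_one]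
  rw [factor, ← Matrix.mul_assoc, trace_mul_comm, trace_one_kronecker_mul, trace_mul_comm,
    reduceSnd]

variable [DecidableEq m] [DecidableEq n]

lemma reduceFst_one {t : Matrix n n ℂ} (ht : IsDensity t) :
    reduceFst t (1 : Matrix (m × n) (m × n) ℂ) = 1 := by
  rw [← one_kronecker_one, reduceFst_kronecker, Matrix.one_mul, ht.2, one_smul]

lemma reduceSnd_one {s : Matrix m m ℂ} (hs : IsDensity s) :
    reduceSnd s (1 : Matrix (m × n) (m × n) ℂ) = 1 := by
  rw [← one_kronecker_one, reduceSnd_kronecker, Matrix.one_mul, hs.2, one_smul]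

end ReducedObservable

section ProductState

variable {m n : Type*} [Fintype m] [Fintype n] [DecidableEq m] [DecidableEq n]
  {s : Matrix m m ℂ} {t : Matrix n n ℂ}

lemma quantumCov_kronecker_one_left (ht : IsDensity t) (X : Matrix m m ℂ)
    (M : Matrix (m × n) (m × n) ℂ) :
    quantumCov (s ⊗ₖ t) (X ⊗ₖ 1) M = quantumCov s X (reduceFst t M) := by
  have mean_mul : ((X ⊗ₖ (1 : Matrix n n ℂ)) * M * (s ⊗ₖ t)).trace
      = (X * reduceFst t M * s).trace := by
    rw [Matrix.mul_assoc, trace_mul_comm, Matrix.mul_assoc, ← mul_kronecker_mul, Matrix.mul_one,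
      trace_mul_kronecker_eq_reduceFst, ← Matrix.mul_assoc, trace_mul_comm, ← Matrix.mul_assoc]
  rw [quantumCov, mean_mul, ← mul_kronecker_mul, trace_kronecker, Matrix.one_mul, ht.2, mul_one,
    trace_mul_kronecker_eq_reduceFst, quantumCov]

lemma quantumCov_kronecker_one_right (ht : IsDensity t) (M : Matrix (m × n) (m × n) ℂ)
    (X : Matrix m m ℂ) :
    quantumCov (s ⊗ₖ t) M (X ⊗ₖ 1) = quantumCov s (reduceFst t M) X := by
  rw [quantumCov, Matrix.mul_assoc, ← mul_kronecker_mul, trace_kronecker, Matrix.one_mul, ht.2,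
    mul_one, trace_mul_kronecker_eq_reduceFst, trace_mul_kronecker_eq_reduceFst,
    ← Matrix.mul_assoc, quantumCov]

lemma quantumCov_one_kronecker_left (hs : IsDensity s) (X : Matrix n n ℂ)
    (M : Matrix (m × n) (m × n) ℂ) :
    quantumCov (s ⊗ₖ t) (1 ⊗ₖ X) M = quantumCov t X (reduceSnd s M) := by
  have mean_mul : (((1 : Matrix m m ℂ) ⊗ₖ X) * M * (s ⊗ₖ t)).trace
      = (X * reduceSnd s M * t).trace := by
    rw [Matrix.mul_assoc, trace_mul_comm, Matrix.mul_assoc, ← mul_kronecker_mul, Matrix.mul_one,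
      trace_mul_kronecker_eq_reduceSnd, ← Matrix.mul_assoc, trace_mul_comm, ← Matrix.mul_assoc]
  rw [quantumCov, mean_mul, ← mul_kronecker_mul, trace_kronecker, Matrix.one_mul, hs.2, one_mul,
    trace_mul_kronecker_eq_reduceSnd, quantumCov]

lemma quantumCov_one_kronecker_right (hs : IsDensity s) (M : Matrix (m × n) (m × n) ℂ)
    (X : Matrix n n ℂ) :
    quantumCov (s ⊗ₖ t) M (1 ⊗ₖ X) = quantumCov t (reduceSnd s M) X := by
  rw [quantumCov, Matrix.mul_assoc, ← mul_kronecker_mul, trace_kronecker, Matrix.one_mul, hs.2,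
    one_mul, trace_mul_kronecker_eq_reduceSnd, trace_mul_kronecker_eq_reduceSnd,
    ← Matrix.mul_assoc, quantumCov]

/-- A noncommutative Efron–Stein inequality. -/
theorem quantumCov_reduceFst_add_quantumCov_reduceSnd_le (hs : IsDensity s) (ht : IsDensity t)
    {M : Matrix (m × n) (m × n) ℂ} (hM : M.IsHermitian) :
    quantumCov s (reduceFst t M) (reduceFst t M) + quantumCov t (reduceSnd s M) (reduceSnd s M)
      ≤ quantumCov (s ⊗ₖ t) M M := by
  set X := reduceFst t M with hX
  set Y := reduceSnd s M with hY
  have hXh : Xᴴ = X := isHermitian_reduceFst ht.1.1 hM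
  have hYh : Yᴴ = Y := isHermitian_reduceSnd hs.1.1 hM
  have residual_nonneg := quantumCov_conjTranspose_self_nonneg (hs.kronecker ht)
    (M - X ⊗ₖ (1 : Matrix n n ℂ) - (1 : Matrix m m ℂ) ⊗ₖ Y)
  simp only [conjTranspose_sub, conjTranspose_kronecker, conjTranspose_one, hM.eq, hXh, hYh,
    quantumCov_sub_left, quantumCov_sub_right] at residual_nonneg
  simp only [quantumCov_kronecker_one_left ht, quantumCov_kronecker_one_right ht,
    quantumCov_one_kronecker_left hs, quantumCov_one_kronecker_right hs, reduceFst_kronecker,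
    reduceSnd_kronecker, ← hX, ← hY, Matrix.one_mul, hs.2, ht.2, one_smul,
    quantumCov_smul_one_left hs, quantumCov_smul_one_right hs] at residual_nonneg
  linear_combination residual_nonneg

end ProductState

section BipartiteState

variable {m n : Type*} [Fintype m] [Fintype n]

lemma quantumCov_kronecker_one_kronecker_one [DecidableEq n] (ρ : Matrix (m × n) (m × n) ℂ)
    (X Y : Matrix m m ℂ) :
    quantumCov ρ (X ⊗ₖ 1) (Y ⊗ₖ 1) = quantumCov (ptrace₂ ρ) X Y := by
  simp only [quantumCov, ← mul_kronecker_mul, Matrix.one_mul, trace_kronecker_one_mul]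

lemma quantumCov_one_kronecker_one_kronecker [DecidableEq m] (ρ : Matrix (m × n) (m × n) ℂ)
    (X Y : Matrix n n ℂ) :
    quantumCov ρ (1 ⊗ₖ X) (1 ⊗ₖ Y) = quantumCov (ptrace₁ ρ) X Y := by
  simp only [quantumCov, ← mul_kronecker_mul, Matrix.one_mul, trace_one_kronecker_mul]

variable [DecidableEq m] [DecidableEq n]

lemma quantumCov_one_kronecker_kronecker_one (ρ : Matrix (m × n) (m × n) ℂ)
    (X : Matrix m m ℂ) (Y : Matrix n n ℂ) :
    quantumCov ρ (1 ⊗ₖ Y) (X ⊗ₖ 1) = quantumCov ρ (X ⊗ₖ 1) (1 ⊗ₖ Y) := by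
  simp only [quantumCov, ← mul_kronecker_mul, Matrix.one_mul, Matrix.mul_one, mul_comm]

theorem two_mul_quantumCov_kronecker_one_one_kronecker_le {ρ : Matrix (m × n) (m × n) ℂ}
    (hρ : IsDensity ρ) {X : Matrix m m ℂ} {Y : Matrix n n ℂ} (hX : X.IsHermitian)
    (hY : Y.IsHermitian) :
    2 * quantumCov ρ (X ⊗ₖ 1) (1 ⊗ₖ Y)
      ≤ quantumCov (ptrace₂ ρ) X X + quantumCov (ptrace₁ ρ) Y Y := by
  have difference_nonneg := quantumCov_conjTranspose_self_nonneg hρ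
    (X ⊗ₖ (1 : Matrix n n ℂ) - (1 : Matrix m m ℂ) ⊗ₖ Y)
  simp only [conjTranspose_sub, conjTranspose_kronecker, conjTranspose_one, hX.eq, hY.eq,
    quantumCov_sub_left, quantumCov_sub_right, quantumCov_kronecker_one_kronecker_one,
    quantumCov_one_kronecker_one_kronecker, quantumCov_one_kronecker_kronecker_one]
    at difference_nonneg
  linear_combination difference_nonneg

end BipartiteState

section Heisenberg

variable {ι m n : Type*} [Fintype ι] [Fintype m]

/-- The Heisenberg-picture adjoint `P ↦ ∑ l, K_l† P K_l` of the map with Kraus operators `K`. -/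
def heisenberg (K : ι → Matrix m n ℂ) (P : Matrix m m ℂ) : Matrix n n ℂ :=
  ∑ l, (K l)ᴴ * P * K l

lemma heisenberg_one [DecidableEq m] [DecidableEq n] {K : ι → Matrix m n ℂ}
    (hK : ∑ l, (K l)ᴴ * K l = 1) : heisenberg K 1 = 1 := by
  simpa only [heisenberg, Matrix.mul_one] using hK

lemma conjTranspose_heisenberg (K : ι → Matrix m n ℂ) (P : Matrix m m ℂ) :
    (heisenberg K P)ᴴ = heisenberg K Pᴴ := by
  simp only [heisenberg, conjTranspose_sum, conjTranspose_mul, conjTranspose_conjTranspose,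
    Matrix.mul_assoc]

lemma isHermitian_heisenberg (K : ι → Matrix m n ℂ) {P : Matrix m m ℂ} (hP : P.IsHermitian) :
    (heisenberg K P).IsHermitian := by
  rw [IsHermitian, conjTranspose_heisenberg, hP.eq]

/-- The Kadison–Schwarz inequality. -/
theorem posSemidef_heisenberg_sub [Fintype n] [DecidableEq n] {K : ι → Matrix m n ℂ}
    (hK : ∑ l, (K l)ᴴ * K l = 1) (P : Matrix m m ℂ) :
    (heisenberg K (Pᴴ * P) - (heisenberg K P)ᴴ * heisenberg K P).PosSemidef := by
  set Q := heisenberg K P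
  have expand (l : ι) : (P * K l - K l * Q)ᴴ * (P * K l - K l * Q)
      = (K l)ᴴ * (Pᴴ * P) * K l - ((K l)ᴴ * Pᴴ * K l) * Q - Qᴴ * ((K l)ᴴ * P * K l)
        + Qᴴ * ((K l)ᴴ * K l) * Q := by
    simp only [conjTranspose_sub, conjTranspose_mul, Matrix.sub_mul, Matrix.mul_sub,
      Matrix.mul_assoc]
    abel
  have sum_of_squares : heisenberg K (Pᴴ * P) - Qᴴ * Q
      = ∑ l, (P * K l - K l * Q)ᴴ * (P * K l - K l * Q) := by
    have sum_adjoint : ∑ l, (K l)ᴴ * Pᴴ * K l = Qᴴ := (conjTranspose_heisenberg K P).symm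
    have sum_self : ∑ l, (K l)ᴴ * P * K l = Q := rfl
    simp only [expand, Finset.sum_add_distrib, Finset.sum_sub_distrib, ← Finset.sum_mul,
      ← Finset.mul_sum, hK, sum_adjoint, sum_self, Matrix.mul_one]
    rw [heisenberg]
    abel
  rw [sum_of_squares]
  exact posSemidef_sum _ fun l _ => posSemidef_conjTranspose_mul_self _

end Heisenberg

section TriangleNetwork

lemma sum_kronecker_sum {ι κ l m n p : Type*} [Fintype ι] [Fintype κ]
    (X : ι → Matrix l m ℂ) (Y : κ → Matrix n p ℂ) :
    (∑ i, X i) ⊗ₖ (∑ j, Y j) = ∑ i, ∑ j, X i ⊗ₖ Y j := by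
  ext a b
  simp only [kroneckerMap_apply, Matrix.sum_apply, Finset.sum_mul_sum]

/-- The regrouping of the six factors `C₂, A₁, A₂, B₁, B₂, C₁` of the triangle network by party
into `A₁A₂`, `B₁B₂`, `C₁C₂`. -/
def partyEquiv (d : ℕ) : TriIdx d ≃ D2 d × D2 d × D2 d where
  toFun i := ((i.1.2, i.2.1.1), (i.2.1.2, i.2.2.1), (i.2.2.2, i.1.1))
  invFun j := ((j.2.2.2, j.1.1), (j.1.2, j.2.1.1), (j.2.1.2, j.2.2.1))

variable {d nA nB nC LA LB LC : ℕ}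

/-- The product `X ⊗ Y ⊗ W` of observables of Alice, Bob and Charlie, as an observable on the
triangle network. -/
def partyObs (X Y W : Matrix (D2 d) (D2 d) ℂ) : Matrix (TriIdx d) (TriIdx d) ℂ :=
  (X ⊗ₖ (Y ⊗ₖ W)).submatrix (partyEquiv d) (partyEquiv d)

lemma globalKraus_eq_submatrix (KA : Matrix (Fin nA) (D2 d) ℂ) (KB : Matrix (Fin nB) (D2 d) ℂ)
    (KC : Matrix (Fin nC) (D2 d) ℂ) :
    globalKraus KA KB KC = (KA ⊗ₖ (KB ⊗ₖ KC)).submatrix id (partyEquiv d) := by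
  ext o i
  exact mul_assoc _ _ _

lemma conjTranspose_globalKraus_mul_kronecker_mul (KA : Matrix (Fin nA) (D2 d) ℂ)
    (KB : Matrix (Fin nB) (D2 d) ℂ) (KC : Matrix (Fin nC) (D2 d) ℂ)
    (P : Matrix (Fin nA) (Fin nA) ℂ) (Q : Matrix (Fin nB) (Fin nB) ℂ)
    (R : Matrix (Fin nC) (Fin nC) ℂ) :
    (globalKraus KA KB KC)ᴴ * (P ⊗ₖ (Q ⊗ₖ R)) * globalKraus KA KB KC
      = partyObs (KAᴴ * P * KA) (KBᴴ * Q * KB) (KCᴴ * R * KC) := by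
  rw [globalKraus_eq_submatrix, conjTranspose_submatrix, conjTranspose_kronecker,
    conjTranspose_kronecker, partyObs, mul_kronecker_mul, mul_kronecker_mul, mul_kronecker_mul,
    mul_kronecker_mul]
  rfl

lemma partyObs_heisenberg (KA : Fin LA → Matrix (Fin nA) (D2 d) ℂ)
    (KB : Fin LB → Matrix (Fin nB) (D2 d) ℂ) (KC : Fin LC → Matrix (Fin nC) (D2 d) ℂ)
    (P : Matrix (Fin nA) (Fin nA) ℂ) (Q : Matrix (Fin nB) (Fin nB) ℂ)
    (R : Matrix (Fin nC) (Fin nC) ℂ) :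
    partyObs (heisenberg KA P) (heisenberg KB Q) (heisenberg KC R)
      = ∑ l, ∑ m, ∑ n, (globalKraus (KA l) (KB m) (KC n))ᴴ * (P ⊗ₖ (Q ⊗ₖ R))
          * globalKraus (KA l) (KB m) (KC n) := by
  simp only [conjTranspose_globalKraus_mul_kronecker_mul, heisenberg, partyObs,
    sum_kronecker_sum]
  ext p q
  simp only [submatrix_apply, Matrix.sum_apply, kroneckerMap_apply, Finset.mul_sum]

theorem trace_kronecker_mul_ctnState (ρa ρb ρc : Matrix (D2 d) (D2 d) ℂ)
    (KA : Fin LA → Matrix (Fin nA) (D2 d) ℂ) (KB : Fin LB → Matrix (Fin nB) (D2 d) ℂ)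
    (KC : Fin LC → Matrix (Fin nC) (D2 d) ℂ) (P : Matrix (Fin nA) (Fin nA) ℂ)
    (Q : Matrix (Fin nB) (Fin nB) ℂ) (R : Matrix (Fin nC) (Fin nC) ℂ) :
    ((P ⊗ₖ (Q ⊗ₖ R)) * ctnState ρa ρb ρc KA KB KC).trace
      = (partyObs (heisenberg KA P) (heisenberg KB Q) (heisenberg KC R)
          * btnState ρa ρb ρc).trace := by
  simp only [partyObs_heisenberg, ctnState, Finset.mul_sum, Finset.sum_mul, trace_sum]
  refine Finset.sum_congr rfl fun l _ => Finset.sum_congr rfl fun m _ =>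
    Finset.sum_congr rfl fun n _ => ?_
  rw [← Matrix.mul_assoc, ← Matrix.mul_assoc, trace_mul_comm]
  simp only [Matrix.mul_assoc]

lemma trace_partyObs_kronecker_mul_btnState (ρa ρb ρc : Matrix (D2 d) (D2 d) ℂ)
    (X₁ X₂ Y₁ Y₂ W₁ W₂ : Matrix (Fin d) (Fin d) ℂ) :
    (partyObs (X₁ ⊗ₖ X₂) (Y₁ ⊗ₖ Y₂) (W₁ ⊗ₖ W₂) * btnState ρa ρb ρc).trace
      = ((W₂ ⊗ₖ X₁) * ρb).trace * (((X₂ ⊗ₖ Y₁) * ρc).trace * ((Y₂ ⊗ₖ W₁) * ρa).trace) := by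
  have by_source : partyObs (X₁ ⊗ₖ X₂) (Y₁ ⊗ₖ Y₂) (W₁ ⊗ₖ W₂)
      = (W₂ ⊗ₖ X₁) ⊗ₖ ((X₂ ⊗ₖ Y₁) ⊗ₖ (Y₂ ⊗ₖ W₁)) := by
    ext p q
    simp only [partyObs, partyEquiv, Equiv.coe_fn_mk, submatrix_apply, kroneckerMap_apply]
    ring
  rw [by_source, btnState, ← mul_kronecker_mul, ← mul_kronecker_mul, trace_kronecker,
    trace_kronecker]

-- Both sides are bilinear in `X` and `Y`, so it suffices to take both to be product observables.
lemma trace_partyObs_one_mul_btnState (ρa ρb ρc X Y : Matrix (D2 d) (D2 d) ℂ) :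
    (partyObs X Y 1 * btnState ρa ρb ρc).trace
      = ((reduceSnd (ptrace₁ ρb) X ⊗ₖ reduceFst (ptrace₂ ρa) Y) * ρc).trace := by
  induction X using kronecker_induction with
  | add X X' hX hX' =>
    simp only [partyObs, add_kronecker, submatrix_add, Pi.add_apply, Matrix.add_mul, trace_add,
      reduceSnd_add] at hX hX' ⊢
    rw [hX, hX']
  | kronecker X₁ X₂ =>
    induction Y using kronecker_induction with
    | add Y Y' hY hY' =>
      simp only [partyObs, add_kronecker, kronecker_add, submatrix_add, Pi.add_apply,
        Matrix.add_mul, trace_add, reduceFst_add] at hY hY' ⊢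
      rw [hY, hY']
    | kronecker Y₁ Y₂ =>
      rw [← one_kronecker_one, trace_partyObs_kronecker_mul_btnState, trace_one_kronecker_mul,
        trace_kronecker_one_mul, reduceSnd_kronecker, reduceFst_kronecker, smul_kronecker,
        kronecker_smul, Matrix.smul_mul, Matrix.smul_mul, trace_smul, trace_smul, smul_eq_mul,
        smul_eq_mul]
      ring

end TriangleNetwork

section CyclicSymmetry

/-- The cyclic relabelling `(b, c, a) ↦ (a, b, c)` of the three parties. It also relabels the three
pairs of factors of the triangle network, one for each source. -/
def rotateParties (α β γ : Type*) : β × γ × α ≃ α × β × γ :=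
  (Equiv.prodAssoc β γ α).symm.trans (Equiv.prodComm (β × γ) α)

variable {d nA nB nC LA LB LC : ℕ}

lemma globalKraus_rotate (KA : Matrix (Fin nA) (D2 d) ℂ) (KB : Matrix (Fin nB) (D2 d) ℂ)
    (KC : Matrix (Fin nC) (D2 d) ℂ) :
    globalKraus KB KC KA
      = (globalKraus KA KB KC).submatrix (rotateParties _ _ _) (rotateParties _ _ _) := by
  ext o i
  simp only [globalKraus, rotateParties, of_apply, submatrix_apply, Equiv.trans_apply,
    Equiv.prodAssoc_symm_apply, Equiv.prodComm_apply, Prod.swap_prod_mk]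
  ring

lemma btnState_rotate (ρa ρb ρc : Matrix (D2 d) (D2 d) ℂ) :
    btnState ρb ρc ρa
      = (btnState ρa ρb ρc).submatrix (rotateParties _ _ _) (rotateParties _ _ _) := by
  ext p q
  simp only [btnState, rotateParties, kroneckerMap_apply, submatrix_apply, Equiv.trans_apply,
    Equiv.prodAssoc_symm_apply, Equiv.prodComm_apply, Prod.swap_prod_mk]
  ring

lemma ctnState_rotate (ρa ρb ρc : Matrix (D2 d) (D2 d) ℂ)
    (KA : Fin LA → Matrix (Fin nA) (D2 d) ℂ) (KB : Fin LB → Matrix (Fin nB) (D2 d) ℂ)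
    (KC : Fin LC → Matrix (Fin nC) (D2 d) ℂ) :
    ctnState ρb ρc ρa KB KC KA
      = (ctnState ρa ρb ρc KA KB KC).submatrix (rotateParties _ _ _) (rotateParties _ _ _) := by
  have term_rotate (l : Fin LA) (m : Fin LB) (n : Fin LC) :
      globalKraus (KB m) (KC n) (KA l) * btnState ρb ρc ρa
          * (globalKraus (KB m) (KC n) (KA l))ᴴ
        = (globalKraus (KA l) (KB m) (KC n) * btnState ρa ρb ρc
          * (globalKraus (KA l) (KB m) (KC n))ᴴ).submatrix
            (rotateParties _ _ _) (rotateParties _ _ _) := by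
    rw [globalKraus_rotate, btnState_rotate, conjTranspose_submatrix, submatrix_mul_equiv,
      submatrix_mul_equiv]
  simp only [ctnState, term_rotate]
  ext p q
  simp only [Matrix.sum_apply, submatrix_apply]
  exact (Finset.sum_congr rfl fun _ _ => Finset.sum_comm).trans Finset.sum_comm

lemma outA_rotate (Q : Matrix (Fin nB) (Fin nB) ℂ) :
    (outA Q : Matrix (Fin nB × Fin nC × Fin nA) _ ℂ)
      = (outB Q).submatrix (rotateParties _ _ _) (rotateParties _ _ _) := by
  ext p q
  simp [outA, outB, rotateParties, one_apply, Prod.ext_iff, and_comm]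

lemma outB_rotate (R : Matrix (Fin nC) (Fin nC) ℂ) :
    (outB R : Matrix (Fin nB × Fin nC × Fin nA) _ ℂ)
      = (outC R).submatrix (rotateParties _ _ _) (rotateParties _ _ _) := by
  ext p q
  simp [outB, outC, rotateParties, one_apply, ite_and]

lemma outC_rotate (P : Matrix (Fin nA) (Fin nA) ℂ) :
    (outC P : Matrix (Fin nB × Fin nC × Fin nA) _ ℂ)
      = (outA P).submatrix (rotateParties _ _ _) (rotateParties _ _ _) := by
  ext p q
  by_cases p.1 = q.1 <;> by_cases p.2.1 = q.2.1 <;>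
    simp [outA, outC, rotateParties, one_apply, Prod.ext_iff, *]

lemma quantumCov_ctnState_rotate (ρa ρb ρc : Matrix (D2 d) (D2 d) ℂ)
    (KA : Fin LA → Matrix (Fin nA) (D2 d) ℂ) (KB : Fin LB → Matrix (Fin nB) (D2 d) ℂ)
    (KC : Fin LC → Matrix (Fin nC) (D2 d) ℂ)
    (X Y : Matrix (Fin nA × Fin nB × Fin nC) (Fin nA × Fin nB × Fin nC) ℂ) :
    quantumCov (ctnState ρb ρc ρa KB KC KA)
        (X.submatrix (rotateParties _ _ _) (rotateParties _ _ _))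
        (Y.submatrix (rotateParties _ _ _) (rotateParties _ _ _))
      = quantumCov (ctnState ρa ρb ρc KA KB KC) X Y := by
  rw [ctnState_rotate ρa ρb ρc, quantumCov_submatrix]

end CyclicSymmetry

section CovarianceBound

variable {d nA nB nC LA LB LC : ℕ} {ρa ρb ρc : Matrix (D2 d) (D2 d) ℂ}
  {KA : Fin LA → Matrix (Fin nA) (D2 d) ℂ} {KB : Fin LB → Matrix (Fin nB) (D2 d) ℂ}
  {KC : Fin LC → Matrix (Fin nC) (D2 d) ℂ}

lemma outB_eq_kronecker (Q : Matrix (Fin nB) (Fin nB) ℂ) :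
    (outB Q : Matrix (Fin nA × Fin nB × Fin nC) _ ℂ) = 1 ⊗ₖ (Q ⊗ₖ 1) := by
  ext p q
  by_cases p.1 = q.1 <;> by_cases p.2.2 = q.2.2 <;> simp [outB, one_apply, *]

lemma trace_outA_mul_outB_mul_ctnState (hKC : ∑ l, (KC l)ᴴ * KC l = 1)
    (P : Matrix (Fin nA) (Fin nA) ℂ) (Q : Matrix (Fin nB) (Fin nB) ℂ) :
    (outA P * outB Q * ctnState ρa ρb ρc KA KB KC).trace
      = ((reduceSnd (ptrace₁ ρb) (heisenberg KA P) ⊗ₖ reduceFst (ptrace₂ ρa) (heisenberg KB Q))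
          * ρc).trace := by
  rw [outA, outB_eq_kronecker, ← mul_kronecker_mul, Matrix.mul_one, Matrix.one_mul,
    trace_kronecker_mul_ctnState, heisenberg_one hKC, trace_partyObs_one_mul_btnState]

lemma outA_one : (outA 1 : Matrix (Fin nA × Fin nB × Fin nC) _ ℂ) = 1 := one_kronecker_one

lemma outB_one : (outB 1 : Matrix (Fin nA × Fin nB × Fin nC) _ ℂ) = 1 := by
  rw [outB_eq_kronecker, one_kronecker_one, one_kronecker_one]

lemma trace_outA_mul_ctnState (ha : IsDensity ρa) (hKB : ∑ l, (KB l)ᴴ * KB l = 1)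
    (hKC : ∑ l, (KC l)ᴴ * KC l = 1) (P : Matrix (Fin nA) (Fin nA) ℂ) :
    (outA P * ctnState ρa ρb ρc KA KB KC).trace
      = ((reduceSnd (ptrace₁ ρb) (heisenberg KA P) ⊗ₖ 1) * ρc).trace := by
  have := trace_outA_mul_outB_mul_ctnState (ρa := ρa) (ρb := ρb) (ρc := ρc) (KA := KA) (KB := KB)
    hKC P 1
  rwa [outB_one, Matrix.mul_one, heisenberg_one hKB, reduceFst_one ha.ptrace₂] at this

lemma trace_outB_mul_ctnState (hb : IsDensity ρb) (hKA : ∑ l, (KA l)ᴴ * KA l = 1)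
    (hKC : ∑ l, (KC l)ᴴ * KC l = 1) (Q : Matrix (Fin nB) (Fin nB) ℂ) :
    (outB Q * ctnState ρa ρb ρc KA KB KC).trace
      = ((1 ⊗ₖ reduceFst (ptrace₂ ρa) (heisenberg KB Q)) * ρc).trace := by
  have := trace_outA_mul_outB_mul_ctnState (ρa := ρa) (ρb := ρb) (ρc := ρc) (KA := KA) (KB := KB)
    hKC 1 Q
  rwa [outA_one, Matrix.one_mul, heisenberg_one hKA, reduceSnd_one hb.ptrace₁] at this

lemma quantumCov_ctnState_outA_outB (ha : IsDensity ρa) (hb : IsDensity ρb)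
    (hKA : ∑ l, (KA l)ᴴ * KA l = 1) (hKB : ∑ l, (KB l)ᴴ * KB l = 1)
    (hKC : ∑ l, (KC l)ᴴ * KC l = 1) (P : Matrix (Fin nA) (Fin nA) ℂ)
    (Q : Matrix (Fin nB) (Fin nB) ℂ) :
    quantumCov (ctnState ρa ρb ρc KA KB KC) (outA P) (outB Q)
      = quantumCov ρc (reduceSnd (ptrace₁ ρb) (heisenberg KA P) ⊗ₖ 1)
          (1 ⊗ₖ reduceFst (ptrace₂ ρa) (heisenberg KB Q)) := by
  rw [quantumCov, trace_outA_mul_outB_mul_ctnState hKC, trace_outA_mul_ctnState ha hKB hKC,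
    trace_outB_mul_ctnState hb hKA hKC, quantumCov, ← mul_kronecker_mul, Matrix.mul_one,
    Matrix.one_mul]

theorem two_mul_quantumCov_ctnState_le (ha : IsDensity ρa) (hb : IsDensity ρb)
    (hc : IsDensity ρc) (hKA : ∑ l, (KA l)ᴴ * KA l = 1) (hKB : ∑ l, (KB l)ᴴ * KB l = 1)
    (hKC : ∑ l, (KC l)ᴴ * KC l = 1) {P : Matrix (Fin nA) (Fin nA) ℂ}
    {Q : Matrix (Fin nB) (Fin nB) ℂ} (hP : P.IsHermitian) (hQ : Q.IsHermitian) :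
    2 * quantumCov (ctnState ρa ρb ρc KA KB KC) (outA P) (outB Q)
      ≤ quantumCov (ptrace₂ ρc) (reduceSnd (ptrace₁ ρb) (heisenberg KA P))
          (reduceSnd (ptrace₁ ρb) (heisenberg KA P))
        + quantumCov (ptrace₁ ρc) (reduceFst (ptrace₂ ρa) (heisenberg KB Q))
          (reduceFst (ptrace₂ ρa) (heisenberg KB Q)) := by
  rw [quantumCov_ctnState_outA_outB ha hb hKA hKB hKC]
  exact two_mul_quantumCov_kronecker_one_one_kronecker_le hc
    (isHermitian_reduceSnd hb.ptrace₁.1.1 (isHermitian_heisenberg KA hP))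
    (isHermitian_reduceFst ha.ptrace₂.1.1 (isHermitian_heisenberg KB hQ))

theorem quantumCov_add_quantumCov_le_quantumCov_outA (ha : IsDensity ρa) (hb : IsDensity ρb)
    (hc : IsDensity ρc) (hKA : ∑ l, (KA l)ᴴ * KA l = 1) (hKB : ∑ l, (KB l)ᴴ * KB l = 1)
    (hKC : ∑ l, (KC l)ᴴ * KC l = 1) {P : Matrix (Fin nA) (Fin nA) ℂ} (hP : P.IsHermitian) :
    quantumCov (ptrace₁ ρb) (reduceFst (ptrace₂ ρc) (heisenberg KA P))
          (reduceFst (ptrace₂ ρc) (heisenberg KA P))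
        + quantumCov (ptrace₂ ρc) (reduceSnd (ptrace₁ ρb) (heisenberg KA P))
          (reduceSnd (ptrace₁ ρb) (heisenberg KA P))
      ≤ quantumCov (ctnState ρa ρb ρc KA KB KC) (outA P) (outA P) := by
  have hX := isHermitian_heisenberg KA hP
  have mean (M : Matrix (Fin nA) (Fin nA) ℂ) : (outA M * ctnState ρa ρb ρc KA KB KC).trace
      = (heisenberg KA M * (ptrace₁ ρb ⊗ₖ ptrace₂ ρc)).trace := by
    rw [trace_outA_mul_ctnState ha hKB hKC, trace_kronecker_one_mul,
      trace_mul_kronecker_eq_reduceSnd]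
  have kadison := trace_mul_nonneg (posSemidef_heisenberg_sub hKA P)
    (hb.ptrace₁.kronecker hc.ptrace₂).1
  refine (quantumCov_reduceFst_add_quantumCov_reduceSnd_le hb.ptrace₁ hc.ptrace₂ hX).trans ?_
  rw [hX.eq, hP.eq, Matrix.sub_mul, trace_sub, ← mean] at kadison
  rw [quantumCov, quantumCov, mean, outA, ← mul_kronecker_mul, Matrix.mul_one, ← outA]
  linear_combination kadison

theorem two_mul_covMat_ctnState_le_trace (ha : IsDensity ρa) (hb : IsDensity ρb)
    (hc : IsDensity ρc) (hKA : ∑ l, (KA l)ᴴ * KA l = 1) (hKB : ∑ l, (KB l)ᴴ * KB l = 1)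
    (hKC : ∑ l, (KC l)ᴴ * KC l = 1) {P : Matrix (Fin nA) (Fin nA) ℂ}
    {Q : Matrix (Fin nB) (Fin nB) ℂ} {R : Matrix (Fin nC) (Fin nC) ℂ} (hP : P.IsHermitian)
    (hQ : Q.IsHermitian) (hR : R.IsHermitian) :
    letI Γ := covMat ![outA P, outB Q, outC R] (ctnState ρa ρb ρc KA KB KC)
    2 * (Γ 0 1 + Γ 1 2 + Γ 2 0) ≤ Γ.trace := by
  have covAB := two_mul_quantumCov_ctnState_le ha hb hc hKA hKB hKC hP hQ
  have covBC := two_mul_quantumCov_ctnState_le hb hc ha hKB hKC hKA hQ hR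
  have covCA := two_mul_quantumCov_ctnState_le hc ha hb hKC hKA hKB hR hP
  have varA := quantumCov_add_quantumCov_le_quantumCov_outA ha hb hc hKA hKB hKC hP
  have varB := quantumCov_add_quantumCov_le_quantumCov_outA hb hc ha hKB hKC hKA hQ
  have varC := quantumCov_add_quantumCov_le_quantumCov_outA hc ha hb hKC hKA hKB hR
  rw [outA_rotate Q, quantumCov_ctnState_rotate] at varB
  rw [outA_rotate Q, outB_rotate R, quantumCov_ctnState_rotate] at covBC
  rw [outA_rotate R, outB_rotate P, quantumCov_ctnState_rotate, outB_rotate R, outC_rotate P,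
    quantumCov_ctnState_rotate] at covCA
  rw [outA_rotate R, quantumCov_ctnState_rotate, outB_rotate R, quantumCov_ctnState_rotate]
    at varC
  simp only [trace_fin_three]
  change 2 * (quantumCov _ (outA P) (outB Q) + quantumCov _ (outB Q) (outC R)
    + quantumCov _ (outC R) (outA P)) ≤ quantumCov _ (outA P) (outA P)
      + quantumCov _ (outB Q) (outB Q) + quantumCov _ (outC R) (outC R)
  linear_combination covAB + covBC + covCA + varA + varB + varC

end CovarianceBound

section NoisyGHZ

/-- The Pauli observable `σ_z`. -/
def pauliZ : Matrix (Fin 2) (Fin 2) ℂ := !![1, 0; 0, -1]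

lemma isHermitian_pauliZ : pauliZ.IsHermitian := by
  ext i j
  fin_cases i <;> fin_cases j <;> simp [pauliZ]

lemma trace_mul_ghzNoisy (v : ℝ)
    (M : Matrix (Fin 2 × Fin 2 × Fin 2) (Fin 2 × Fin 2 × Fin 2) ℂ) :
    (M * ghzNoisy v).trace
      = v / 2 * (M (0, 0, 0) (0, 0, 0) + M (0, 0, 0) (1, 1, 1)
          + M (1, 1, 1) (0, 0, 0) + M (1, 1, 1) (1, 1, 1)) + (1 - v) / 8 * M.trace := by
  have sqrt_two : ((√2 : ℝ) : ℂ)⁻¹ * ((√2 : ℝ) : ℂ)⁻¹ = 2⁻¹ := by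
    rw [← mul_inv, ← Complex.ofReal_mul, Real.mul_self_sqrt zero_le_two, Complex.ofReal_ofNat]
  simp only [ghzNoisy, Matrix.mul_add, trace_add, Matrix.mul_smul, trace_smul, mul_vecMulVec,
    trace_vecMulVec, Matrix.mul_one]
  have ghz_term : (M *ᵥ ghzVec) ⬝ᵥ star ghzVec
      = 2⁻¹ * (M (0, 0, 0) (0, 0, 0) + M (0, 0, 0) (1, 1, 1) + M (1, 1, 1) (0, 0, 0)
        + M (1, 1, 1) (1, 1, 1)) := by
    rw [← sqrt_two]
    simp [mulVec, dotProduct, Fintype.sum_prod_type, ghzVec]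
    ring
  rw [ghz_term]
  push_cast
  simp only [smul_eq_mul]
  ring

lemma covMat_ghzNoisy (v : ℝ) :
    covMat ![outA pauliZ, outB pauliZ, outC pauliZ] (ghzNoisy v)
      = of fun i j => if i = j then 1 else (v : ℂ) := by
  ext i j
  simp only [covMat, of_apply, trace_mul_ghzNoisy]
  fin_cases i <;> fin_cases j <;>
    simp [trace, mul_apply, Fintype.sum_prod_type, outA, outB, outC, pauliZ] <;> ring

end NoisyGHZ

/-- For `1/2 < v ≤ 1`, the noisy GHZ state
`v|GHZ⟩⟨GHZ| + (1−v)·1/8` cannot be prepared in the triangle network with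
local channels. -/
theorem stmt12 (v : ℝ) (hv₁ : 1 / 2 < v) (hv₂ : v ≤ 1) :
    ¬ ∃ (d : ℕ), 1 ≤ d ∧
      ∃ (LA LB LC : ℕ)
        (ρa ρb ρc : Matrix (D2 d) (D2 d) ℂ)
        (KA : Fin LA → Matrix (Fin 2) (D2 d) ℂ)
        (KB : Fin LB → Matrix (Fin 2) (D2 d) ℂ)
        (KC : Fin LC → Matrix (Fin 2) (D2 d) ℂ),
        IsDensity ρa ∧ IsDensity ρb ∧ IsDensity ρc ∧
        (∑ l, (KA l)ᴴ * KA l = 1) ∧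
        (∑ l, (KB l)ᴴ * KB l = 1) ∧
        (∑ l, (KC l)ᴴ * KC l = 1) ∧
        ctnState ρa ρb ρc KA KB KC = ghzNoisy v := by
  rintro ⟨d, -, LA, LB, LC, ρa, ρb, ρc, KA, KB, KC, ha, hb, hc, hKA, hKB, hKC, hσ⟩
  have bound := two_mul_covMat_ctnState_le_trace ha hb hc hKA hKB hKC
    isHermitian_pauliZ isHermitian_pauliZ isHermitian_pauliZ
  simp only [hσ, covMat_ghzNoisy, trace_fin_three, of_apply, Fin.isValue, Fin.reduceEq,
    zero_ne_one, if_true, if_false] at bound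
  have : 2 * (v + v + v) ≤ 1 + 1 + 1 := by exact_mod_cast bound
  linarith
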